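/- Let A be a finite distributive nearlattice. For a ∈ A define ê(a) = {x ∈ Irr(A) : a ≰ x}, and let N(S(A)) be the collection of all downsets U of the poset Irr(A) such that the set {x ∈ Irr(A) : x ∉ U} has a greatest lower bound in A (for U = Irr(A) this is the empty meet, equal to 1). Then ê is an order isomorphism from A onto ⟨N(S(A)), ⊆⟩: each ê(a) is a downset of Irr(A) lying in N(S(A)); ê is injective; every U ∈ N(S(A)) equals ê(a) for some a ∈ A; and for all a, b ∈ A, a ≤ b iff ê(a) ⊆ ê(b). In particular ê(a ∨ b) = ê(a) ∪ ê(b), ê(1) is the top of N(S(A)), and ê(a ∧ b) = ê(a) ∩ ê(b) whenever a ∧ b exists in A. -/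

import Mathlib

/-- In a join-semilattice, any two elements with a common lower bound have a
greatest lower bound. -/
def HasPartialMeets (A : Type*) [SemilatticeSup A] : Prop :=
  ∀ x y : A, (∃ z, z ≤ x ∧ z ≤ y) → ∃ m, IsGLB ({x, y} : Set A) m

/-- Every principal upset is distributive. -/
def UpsetDistrib (A : Type*) [SemilatticeSup A] : Prop :=
  ∀ a x y z m₁ m₂ m₃ : A, a ≤ x → a ≤ y → a ≤ z →
    IsGLB ({x, y ⊔ z} : Set A) m₁ → IsGLB ({x, y} : Set A) m₂ →
    IsGLB ({x, z} : Set A) m₃ → m₁ = m₂ ⊔ m₃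

/-- A meet-irreducible element of a nearlattice. -/
def IrrElt {A : Type*} [SemilatticeSup A] [OrderTop A] (a : A) : Prop :=
  a ≠ ⊤ ∧ ∀ x y m : A, IsGLB ({x, y} : Set A) m → a = m → a = x ∨ a = y

/-- `ê(a) = {x ∈ Irr(A) : a ≰ x}`. -/
def ehat {A : Type*} [SemilatticeSup A] [OrderTop A] (a : A) : Set A :=
  {x | IrrElt x ∧ ¬ a ≤ x}

/-- `N(S(A))`: the downsets `U` of the poset `Irr(A)` such that the set of
irreducibles not in `U` has a greatest lower bound in `A` (the empty meet
being `1`). -/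
def NSA (A : Type*) [SemilatticeSup A] [OrderTop A] : Set (Set A) :=
  {U | (∀ x ∈ U, IrrElt x) ∧
    (∀ x ∈ U, ∀ y : A, IrrElt y → y ≤ x → y ∈ U) ∧
    ∃ m : A, IsGLB {x : A | IrrElt x ∧ x ∉ U} m}

/-!
An element maximal among those not above `a` is meet-irreducible; under the ascending chain
condition every element is therefore the meet of the irreducibles above it, which makes `ê` an order
embedding into `N(S(A))`. Distributivity makes an irreducible `x` meet-prime: if `a ∧ b ≤ x` then
`x = (x ∨ a) ∧ (x ∨ b)`. By induction an irreducible above a meet of finitely many elements is above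
one of them. If the irreducibles outside a downset `U` have meet `m`, they lie in the finite upset
`[m)`, so an irreducible lies above `m` only if it is outside `U`; that is, `U = ê(m)`.
-/

section Bounds

variable {α : Type*}

theorem wellFoundedGT_of_finite_Ici [Preorder α] [∀ a : α, Finite (Set.Ici a)] :
    WellFoundedGT α := by
  refine ⟨WellFounded.wellFounded_iff_has_min.2 fun s ⟨a, ha⟩ => ?_⟩
  have hfin : (s ∩ Set.Ici a).Finite := (Set.toFinite (Set.Ici a)).inter_of_right s
  obtain ⟨b, hab, hb⟩ := hfin.exists_le_maximal ⟨ha, le_rfl⟩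
  exact ⟨b, hb.prop.1, fun c hc hbc => hb.not_gt ⟨hc, hab.trans hbc.le⟩ hbc⟩

theorem le_isGLB_pair_iff [Preorder α] {a b m z : α} (h : IsGLB {a, b} m) :
    z ≤ m ↔ z ≤ a ∧ z ≤ b := by
  simp [le_isGLB_iff h]

theorem isGLB_insert_iff_isGLB_pair [Preorder α] {s : Set α} {a g m : α} (hg : IsGLB s g) :
    IsGLB (insert a s) m ↔ IsGLB {a, g} m := by
  simp only [IsGLB, lowerBounds_insert, lowerBounds_singleton, hg.lowerBounds_eq]

end Bounds

section Nearlattice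

variable {A : Type*} [SemilatticeSup A]

theorem UpsetDistrib.le_of_le_sup_of_forall_le (hm : HasPartialMeets A) (hd : UpsetDistrib A)
    {m x y z : A} (hmx : m ≤ x) (hmy : m ≤ y) (hmz : m ≤ z) (hz : z ≤ x ⊔ y)
    (hzy : ∀ w, m ≤ w → w ≤ z → w ≤ y → w ≤ x) : z ≤ x := by
  obtain ⟨p, hp⟩ := hm z x ⟨m, hmz, hmx⟩
  obtain ⟨q, hq⟩ := hm z y ⟨m, hmz, hmy⟩
  have hz_glb : IsGLB {z, x ⊔ y} z := IsLeast.isGLB ⟨by simp, by simp [hz]⟩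
  obtain ⟨-, hpx⟩ := (le_isGLB_pair_iff hp).1 le_rfl
  obtain ⟨hqz, hqy⟩ := (le_isGLB_pair_iff hq).1 le_rfl
  have hmq : m ≤ q := (le_isGLB_pair_iff hq).2 ⟨hmz, hmy⟩
  calc
    z = p ⊔ q := hd m z x y z p q hmz hmx hmy hz_glb hp hq
    _ ≤ x := sup_le hpx (hzy q hmq hqz hqy)

theorem UpsetDistrib.isGLB_sup_left (hm : HasPartialMeets A) (hd : UpsetDistrib A) {a b m : A}
    (h : IsGLB {a, b} m) (x : A) : IsGLB {x ⊔ a, x ⊔ b} (x ⊔ m) := by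
  obtain ⟨hma, hmb⟩ := (le_isGLB_pair_iff h).1 le_rfl
  have hmx : m ≤ x ⊔ m := le_sup_right
  refine ⟨by simp [hma.trans le_sup_right, hmb.trans le_sup_right], fun z hz => ?_⟩
  obtain ⟨hza, hzb⟩ : z ≤ x ⊔ a ∧ z ≤ x ⊔ b := by simpa using hz
  -- A lower bound `z` need not lie above `m`, so distributivity is applied to `z ⊔ (x ⊔ m)`.
  suffices z ⊔ (x ⊔ m) ≤ x ⊔ m from le_sup_left.trans this
  refine hd.le_of_le_sup_of_forall_le hm hmx hma (hmx.trans le_sup_right) ?_ fun w hmw hwz hwa => ?_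
  · exact sup_le (hza.trans (sup_le_sup_right le_sup_left a)) le_sup_left
  · refine hd.le_of_le_sup_of_forall_le hm hmx hmb hmw ?_ fun v _ hvw hvb => ?_
    · exact hwz.trans (sup_le (hzb.trans (sup_le_sup_right le_sup_left b)) le_sup_left)
    · exact ((le_isGLB_pair_iff h).2 ⟨hvw.trans hwa, hvb⟩).trans hmx

variable [OrderTop A]

theorem HasPartialMeets.exists_isGLB_of_finite (hm : HasPartialMeets A) {s : Set A}
    (hs : s.Finite) (hbdd : BddBelow s) : ∃ g, IsGLB s g := by
  induction s, hs using Set.Finite.induction_on with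
  | empty => exact ⟨⊤, isGLB_empty⟩
  | @insert a s _ _ ih =>
    obtain ⟨l, hl⟩ := hbdd
    rw [lowerBounds_insert] at hl
    obtain ⟨g, hg⟩ := ih ⟨l, hl.2⟩
    simp only [isGLB_insert_iff_isGLB_pair hg]
    exact hm a g ⟨l, hl.1, hg.2 hl.2⟩

theorem IrrElt.le_or_le_of_isGLB_pair (hm : HasPartialMeets A) (hd : UpsetDistrib A) {x a b m : A}
    (hx : IrrElt x) (h : IsGLB {a, b} m) (hmx : m ≤ x) : a ≤ x ∨ b ≤ x := by
  have hx_glb : IsGLB {x ⊔ a, x ⊔ b} x := by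
    simpa only [sup_eq_left.2 hmx] using hd.isGLB_sup_left hm h x
  exact (hx.2 _ _ _ hx_glb rfl).imp left_eq_sup.1 left_eq_sup.1

theorem IrrElt.exists_mem_le_of_isGLB (hm : HasPartialMeets A) (hd : UpsetDistrib A) {x : A}
    (hx : IrrElt x) {s : Set A} (hs : s.Finite) {m : A} (h : IsGLB s m) (hmx : m ≤ x) :
    ∃ y ∈ s, y ≤ x := by
  induction s, hs using Set.Finite.induction_on generalizing m with
  | empty => exact absurd (top_le_iff.1 ((isGLB_empty_iff.1 h ⊤).trans hmx)) hx.1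
  | @insert a s _ hs ih =>
    obtain ⟨g, hg⟩ :=
      hm.exists_isGLB_of_finite hs ⟨m, lowerBounds_mono_set (Set.subset_insert a s) h.1⟩
    rcases hx.le_or_le_of_isGLB_pair hm hd ((isGLB_insert_iff_isGLB_pair hg).1 h) hmx with hax | hgx
    · exact ⟨a, Set.mem_insert a s, hax⟩
    · obtain ⟨y, hy, hyx⟩ := ih hg hgx
      exact ⟨y, Set.mem_insert_of_mem a hy, hyx⟩

theorem irrElt_of_maximal_not_le {a x : A} (hx : Maximal (¬ a ≤ ·) x) : IrrElt x := by
  refine ⟨fun hxtop => hx.prop (hxtop ▸ le_top), ?_⟩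
  rintro u v m h rfl
  obtain ⟨hxu, hxv⟩ := (le_isGLB_pair_iff h).1 le_rfl
  have a_le_of_ne {w : A} (hxw : x ≤ w) (hne : x ≠ w) : a ≤ w :=
    not_not.1 (hx.not_prop_of_gt (hxw.lt_of_ne hne))
  by_contra! ⟨hxu_ne, hxv_ne⟩
  exact hx.prop ((le_isGLB_pair_iff h).2 ⟨a_le_of_ne hxu hxu_ne, a_le_of_ne hxv hxv_ne⟩)

theorem isGLB_irrElt_ge [WellFoundedGT A] (a : A) : IsGLB {x | IrrElt x ∧ a ≤ x} a := by
  refine ⟨fun x hx => hx.2, fun l hl => ?_⟩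
  by_contra hla
  obtain ⟨x, hax, hx⟩ := exists_maximal_ge_of_wellFoundedGT (¬ l ≤ ·) a hla
  exact hx.prop (hl ⟨irrElt_of_maximal_not_le hx, hax⟩)

theorem ehat_subset_ehat_iff [WellFoundedGT A] {a b : A} : ehat a ⊆ ehat b ↔ a ≤ b := by
  refine ⟨fun h => (isGLB_irrElt_ge b).2 fun x ⟨hx, hbx⟩ => ?_, fun h x ⟨hx, hax⟩ => ?_⟩
  · by_contra hax
    exact (h ⟨hx, hax⟩).2 hbx
  · exact ⟨hx, fun hbx => hax (h.trans hbx)⟩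

theorem ehat_injective [WellFoundedGT A] : Function.Injective (ehat : A → Set A) :=
  fun _ _ h => le_antisymm (ehat_subset_ehat_iff.1 h.le) (ehat_subset_ehat_iff.1 h.ge)

theorem ehat_mem_nsa [WellFoundedGT A] (a : A) : ehat a ∈ NSA A := by
  refine ⟨fun x hx => hx.1, fun x hx y hy hyx => ⟨hy, fun hay => hx.2 (hay.trans hyx)⟩, a, ?_⟩
  have compl_ehat : {x | IrrElt x ∧ x ∉ ehat a} = {x | IrrElt x ∧ a ≤ x} := by
    ext x
    simp +contextual [ehat]
  exact compl_ehat ▸ isGLB_irrElt_ge a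

theorem exists_eq_ehat_of_mem_nsa [∀ a : A, Finite (Set.Ici a)] (hm : HasPartialMeets A)
    (hd : UpsetDistrib A) {U : Set A} (hU : U ∈ NSA A) : ∃ a, U = ehat a := by
  obtain ⟨hirr, hdown, m, h⟩ := hU
  have hfin : {x | IrrElt x ∧ x ∉ U}.Finite := (Set.toFinite (Set.Ici m)).subset h.1
  refine ⟨m, Set.Subset.antisymm (fun x hxU => ⟨hirr x hxU, fun hmx => ?_⟩) fun x ⟨hx, hmx⟩ => ?_⟩
  · obtain ⟨y, ⟨hy, hyU⟩, hyx⟩ := (hirr x hxU).exists_mem_le_of_isGLB hm hd hfin h hmx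
    exact hyU (hdown x hxU y hy hyx)
  · by_contra hxU
    exact hmx (h.1 ⟨hx, hxU⟩)

theorem ehat_sup (a b : A) : ehat (a ⊔ b) = ehat a ∪ ehat b := by
  ext x
  simp only [ehat, Set.mem_ofPred_eq, Set.mem_union, sup_le_iff, not_and_or, and_or_left]

theorem ehat_top : ehat (⊤ : A) = {x | IrrElt x} := by
  ext x
  exact and_iff_left_of_imp fun hx htop => hx.1 (top_le_iff.1 htop)

theorem ehat_eq_inter_of_isGLB_pair (hm : HasPartialMeets A) (hd : UpsetDistrib A) {a b m : A}
    (h : IsGLB {a, b} m) : ehat m = ehat a ∩ ehat b := by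
  obtain ⟨hma, hmb⟩ := (le_isGLB_pair_iff h).1 le_rfl
  refine Set.Subset.antisymm (fun x ⟨hx, hmx⟩ => ?_) fun x ⟨⟨hx, hax⟩, ⟨_, hbx⟩⟩ => ?_
  · exact ⟨⟨hx, fun hax => hmx (hma.trans hax)⟩, hx, fun hbx => hmx (hmb.trans hbx)⟩
  · exact ⟨hx, fun hmx => (hx.le_or_le_of_isGLB_pair hm hd h hmx).elim hax hbx⟩

theorem discrete_representation_general [∀ a : A, Finite (Set.Ici a)] (hm : HasPartialMeets A)
    (hd : UpsetDistrib A) :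
    (∀ a : A, ehat a ∈ NSA A) ∧
      Function.Injective (ehat : A → Set A) ∧
      (∀ U ∈ NSA A, ∃ a : A, U = ehat a) ∧
      (∀ a b : A, a ≤ b ↔ ehat a ⊆ ehat b) ∧
      (∀ a b : A, ehat (a ⊔ b) = ehat a ∪ ehat b) ∧
      (∀ U ∈ NSA A, U ⊆ ehat (⊤ : A)) ∧
      (∀ a b m : A, IsGLB ({a, b} : Set A) m → ehat m = ehat a ∩ ehat b) := by
  have : WellFoundedGT A := wellFoundedGT_of_finite_Ici
  exact ⟨ehat_mem_nsa, ehat_injective, fun U => exists_eq_ehat_of_mem_nsa hm hd,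
    fun a b => ehat_subset_ehat_iff.symm, ehat_sup, fun U hU => ehat_top (A := A) ▸ hU.1,
    fun a b m => ehat_eq_inter_of_isGLB_pair hm hd⟩

end Nearlattice

/-- discrete representation: for a finite distributive
nearlattice `A`, the map `ê : a ↦ {x ∈ Irr(A) : a ≰ x}` is an order isomorphism
from `A` onto `⟨N(S(A)), ⊆⟩`; in particular it turns `∨` into `∪`, sends `1` to
the top of `N(S(A))`, and turns existing meets into intersections. -/
theorem discrete_representation {A : Type*} [SemilatticeSup A] [OrderTop A]
    [Finite A] (hm : HasPartialMeets A) (hd : UpsetDistrib A) :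
    (∀ a : A, ehat a ∈ NSA A) ∧
      Function.Injective (ehat : A → Set A) ∧
      (∀ U ∈ NSA A, ∃ a : A, U = ehat a) ∧
      (∀ a b : A, a ≤ b ↔ ehat a ⊆ ehat b) ∧
      (∀ a b : A, ehat (a ⊔ b) = ehat a ∪ ehat b) ∧
      (∀ U ∈ NSA A, U ⊆ ehat (⊤ : A)) ∧
      (∀ a b m : A, IsGLB ({a, b} : Set A) m → ehat m = ehat a ∩ ehat b) :=
  discrete_representation_general hm hd
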